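/- Let D be a digraph on vertex type V, U a finite set of vertices enumerated by a duplicate-free list l, and D↑U the iterated detour of D over l. If v, w ∉ U are distinct and there is a path in D from v to w, then there is a path from v to w in D↑U, and also a path from v to w in the bypass D↑↑U (the induced subdigraph of D↑U on V \ U). -/

import Mathlib

/-- The detour of a digraph (irreflexive relation) `A` at a vertex `v`. -/
def detour {V : Type*} (A : V → V → Prop) (v : V) : V → V → Prop :=
  fun x y => x ≠ v ∧ y ≠ v ∧ x ≠ y ∧ (A x y ∨ (A x v ∧ A v y))

/-!
A path of `A` between vertices other than `u` becomes a path of the detour at `u` when each passage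
`x → u → ⋯ → u → y` is replaced with the single arc `x → y`, and loops, which the detour does not
have, are dropped. Doing this for each vertex of the list gives the path in the iterated detour; no
arc of the iterated detour meets the list, so the path already lies in the bypass.
-/

open Relation

section Detour

variable {V : Type*} {A : V → V → Prop} {u v w x y : V} {l : List V}

theorem reflTransGen_detour_of_adj_or_adj_adj (hx : x ≠ u) (hy : y ≠ u)
    (h : A x y ∨ (A x u ∧ A u y)) : ReflTransGen (detour A u) x y := by
  obtain rfl | hxy := eq_or_ne x y
  · exact .refl
  · exact .single ⟨hx, hy, hxy, h⟩

-- Keeping a possible last arc into `u` apart from the detour path lets the induction pass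
-- through `u`.
theorem exists_reflTransGen_detour (hv : v ≠ u) (h : ReflTransGen A v w) :
    ∃ x ≠ u, ReflTransGen (detour A u) v x ∧ (x = w ∨ (A x u ∧ w = u)) := by
  induction h with
  | refl => exact ⟨v, hv, .refl, .inl rfl⟩
  | @tail b c _ hbc ih =>
    obtain ⟨x, hx, hvx, hxb⟩ := ih
    obtain rfl | hc := eq_or_ne c u
    · obtain rfl | ⟨hxc, -⟩ := hxb
      · exact ⟨x, hx, hvx, .inr ⟨hbc, rfl⟩⟩
      · exact ⟨x, hx, hvx, .inr ⟨hxc, rfl⟩⟩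
    · have hxc : A x c ∨ (A x u ∧ A u c) := by
        obtain rfl | ⟨hxu, rfl⟩ := hxb
        · exact .inl hbc
        · exact .inr ⟨hxu, hbc⟩
      exact ⟨c, hc, hvx.trans (reflTransGen_detour_of_adj_or_adj_adj hx hc hxc), .inl rfl⟩

theorem reflTransGen_detour (hv : v ≠ u) (hw : w ≠ u) (h : ReflTransGen A v w) :
    ReflTransGen (detour A u) v w := by
  obtain ⟨x, -, hvx, rfl | ⟨-, hwu⟩⟩ := exists_reflTransGen_detour hv h
  · exact hvx
  · exact absurd hwu hw

theorem reflTransGen_foldl_detour (hv : v ∉ l) (hw : w ∉ l) (h : ReflTransGen A v w) :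
    ReflTransGen (l.foldl detour A) v w := by
  induction l generalizing A with
  | nil => exact h
  | cons u l ih =>
    rw [List.mem_cons, not_or] at hv hw
    exact ih hv.2 hw.2 (reflTransGen_detour hv.1 hw.1 h)

theorem left_notMem_of_foldl_detour (h : l.foldl detour A x y) : x ∉ l := by
  induction l using List.reverseRecOn generalizing y with
  | nil => exact List.not_mem_nil
  | append_singleton l u ih =>
    rw [List.foldl_concat] at h
    obtain ⟨hxu, -, -, hxy | ⟨hxu', -⟩⟩ := h
    · simp [ih hxy, hxu]
    · simp [ih hxu', hxu]

end Detour

theorem reflTransGen_subrel {α : Type*} {r : α → α → Prop} {p : α → Prop} {a b : α}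
    (hr : ∀ x y, r x y → p x) (ha : p a) (hb : p b) (h : ReflTransGen r a b) :
    ReflTransGen (Subrel r p) ⟨a, ha⟩ ⟨b, hb⟩ := by
  induction h with
  | refl => exact .refl
  | tail _ hbc ih => exact (ih (hr _ _ hbc)).tail hbc

theorem path_detour_bypass_set_general {V : Type*} (A : V → V → Prop)
    (U : Finset V) (l : List V) (hmem : ∀ x, x ∈ l ↔ x ∈ U)
    (v w : V) (hv : v ∉ U) (hw : w ∉ U) (h : ReflTransGen A v w) :
    ReflTransGen (List.foldl detour A l) v w ∧
      ReflTransGen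
        (fun (x y : {z : V // z ∉ U}) => List.foldl detour A l x.val y.val)
        ⟨v, hv⟩ ⟨w, hw⟩ := by
  have hpath : ReflTransGen (List.foldl detour A l) v w :=
    reflTransGen_foldl_detour (mt (hmem v).1 hv) (mt (hmem w).1 hw) h
  have hsource (x y : V) (hxy : List.foldl detour A l x y) : x ∉ U :=
    mt (hmem x).2 (left_notMem_of_foldl_detour hxy)
  exact ⟨hpath, reflTransGen_subrel hsource hv hw hpath⟩

/-- If `U` is a finite set of vertices (enumerated by a duplicate-free list `l`),
`v, w ∉ U` are distinct, and there is a path in `D` from `v` to `w`, then there are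
paths from `v` to `w` in the iterated detour `D↑U` and in the bypass `D↑↑U`
(the induced subdigraph of `D↑U` on `V \ U`). -/
theorem path_detour_bypass_set {V : Type*} [DecidableEq V]
    (A : V → V → Prop) (hA : Irreflexive A)
    (U : Finset V) (l : List V) (hl : l.Nodup) (hmem : ∀ x, x ∈ l ↔ x ∈ U)
    (v w : V) (hv : v ∉ U) (hw : w ∉ U) (hvw : v ≠ w)
    (h : Relation.ReflTransGen A v w) :
    Relation.ReflTransGen (List.foldl detour A l) v w ∧
      Relation.ReflTransGen
        (fun (x y : {z : V // z ∉ U}) => List.foldl detour A l x.val y.val)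
        ⟨v, hv⟩ ⟨w, hw⟩ :=
  path_detour_bypass_set_general A U l hmem v w hv hw h
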